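/- Let K ≥ 1, let u be a continuously differentiable map from an open neighborhood of the closed unit disk D̄ into ℝ^K, let α > 1, and let β : ℝ → ℂ be differentiable at 0 with β(0) = 0. For t sufficiently close to 0 one has |β(t)| < 1, so φ_{β(t)} is a conformal automorphism of the unit disk. Then the function t ↦ E_α(u ∘ φ_{β(t)}) is differentiable at t = 0 and its derivative equals 4·Re( conj(β′(0)) · ∫_D ( −(1 + |∇u(z)|²)^α + α(1 + |∇u(z)|²)^{α−1}|∇u(z)|² )·z dA(z) ). -/

import Mathlib

/-- The Möbius transformation `φ_β(z) = (z − β)/(1 − conj β · z)`. -/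
noncomputable def phi (β z : ℂ) : ℂ := (z - β) / (1 - (starRingEnd ℂ) β * z)

/-- `|∇u(z)|² = |∂u/∂x(z)|² + |∂u/∂y(z)|²` for a map `u : ℂ → ℝ^K`,
identifying `ℂ` with `ℝ²` via `z = x + iy`. -/
noncomputable def gradSq {K : ℕ} (u : ℂ → EuclideanSpace ℝ (Fin K)) (z : ℂ) : ℝ :=
  ‖fderiv ℝ u z 1‖ ^ 2 + ‖fderiv ℝ u z Complex.I‖ ^ 2

open Complex MeasureTheory Metric Filter Topology

lemma one_sub_conj_mul_ne_zero {b z : ℂ} (hb : ‖b‖ < 1) (hz : ‖z‖ ≤ 1) :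
    1 - (starRingEnd ℂ) b * z ≠ 0 := by
  intro h
  have h1 : ‖(starRingEnd ℂ) b * z‖ = 1 := by rw [← sub_eq_zero.1 h]; simp
  rw [norm_mul, RCLike.norm_conj] at h1
  nlinarith [norm_nonneg b, norm_nonneg z]

lemma one_sub_normSq_pos {b : ℂ} (hb : ‖b‖ < 1) : 0 < 1 - normSq b := by
  rw [normSq_eq_norm_sq]
  nlinarith [norm_nonneg b]

/-- The complex derivative of `phi b`. -/
noncomputable def phiDeriv (b z : ℂ) : ℂ :=
  ((1 - normSq b : ℝ) : ℂ) / (1 - (starRingEnd ℂ) b * z) ^ 2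

lemma hasDerivAt_phi {b z : ℂ} (h : 1 - (starRingEnd ℂ) b * z ≠ 0) :
    HasDerivAt (phi b) (phiDeriv b z) z := by
  have h1 : HasDerivAt (fun w : ℂ => w - b) 1 z := (hasDerivAt_id z).sub_const b
  have h2 : HasDerivAt (fun w : ℂ => 1 - (starRingEnd ℂ) b * w) (-((starRingEnd ℂ) b * 1)) z :=
    ((hasDerivAt_id z).const_mul _).const_sub 1
  refine HasDerivAt.congr_deriv (f := phi b) (h1.div h2 h) ?_
  rw [phiDeriv]
  congr 1
  push_cast
  rw [← mul_conj]
  ring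

lemma normSq_phi {b z : ℂ} (h : 1 - (starRingEnd ℂ) b * z ≠ 0) :
    1 - normSq (phi b z) =
      (1 - normSq b) * (1 - normSq z) / normSq (1 - (starRingEnd ℂ) b * z) := by
  have h' : normSq (1 - (starRingEnd ℂ) b * z) ≠ 0 := by simpa [normSq_eq_zero] using h
  rw [phi, normSq_div, eq_div_iff h', sub_mul, div_mul_cancel₀ _ h']
  simp [normSq_apply]
  ring

lemma norm_phi_lt_one {b z : ℂ} (hb : ‖b‖ < 1) (hz : ‖z‖ < 1) : ‖phi b z‖ < 1 := by
  have h := one_sub_conj_mul_ne_zero hb hz.le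
  have h1 : 0 < 1 - normSq (phi b z) := by
    rw [normSq_phi h]
    exact div_pos (mul_pos (one_sub_normSq_pos hb) (one_sub_normSq_pos hz)) (normSq_pos.2 h)
  rw [normSq_eq_norm_sq] at h1
  nlinarith [norm_nonneg (phi b z)]

lemma one_add_conj_mul_phi {b z : ℂ} (h : 1 - (starRingEnd ℂ) b * z ≠ 0) :
    1 + (starRingEnd ℂ) b * phi b z =
      ((1 - normSq b : ℝ) : ℂ) / (1 - (starRingEnd ℂ) b * z) := by
  rw [phi, eq_div_iff h, add_mul, mul_assoc, div_mul_cancel₀ _ h]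
  push_cast
  rw [← mul_conj]
  ring

lemma phi_neg_phi {b z : ℂ} (hb : ‖b‖ < 1) (hz : ‖z‖ ≤ 1) : phi (-b) (phi b z) = z := by
  have h := one_sub_conj_mul_ne_zero hb hz
  have h2 : ((1 - normSq b : ℝ) : ℂ) ≠ 0 := ofReal_ne_zero.2 (one_sub_normSq_pos hb).ne'
  have h3 := one_add_conj_mul_phi h
  have h4 : phi b z + b = ((1 - normSq b : ℝ) : ℂ) * z / (1 - (starRingEnd ℂ) b * z) := by
    rw [phi, eq_div_iff h, add_mul, div_mul_cancel₀ _ h]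
    push_cast
    rw [← mul_conj]
    ring
  rw [phi, map_neg, neg_mul, sub_neg_eq_add, sub_neg_eq_add, h3, h4,
    div_div_div_cancel_right₀ h, mul_div_cancel_left₀ _ h2]

lemma image_phi_ball {b : ℂ} (hb : ‖b‖ < 1) : phi b '' ball 0 1 = ball 0 1 := by
  have hb' : ‖-b‖ < 1 := by rwa [norm_neg]
  ext z
  simp only [Set.mem_image, mem_ball_zero_iff]
  constructor
  · rintro ⟨w, hw, rfl⟩
    exact norm_phi_lt_one hb hw
  · intro hz
    refine ⟨phi (-b) z, norm_phi_lt_one hb' hz, ?_⟩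
    simpa using phi_neg_phi hb' hz.le

/-- The Jacobian determinant of the inverse of `phi b`. -/
noncomputable def invJac (b w : ℂ) : ℝ :=
  ((1 - normSq b) / normSq (1 + (starRingEnd ℂ) b * w)) ^ 2

lemma invJac_phi {b z : ℂ} (hb : ‖b‖ < 1) (hz : ‖z‖ ≤ 1) :
    invJac b (phi b z) = (normSq (phiDeriv b z))⁻¹ := by
  have h := one_sub_conj_mul_ne_zero hb hz
  have h2 := (one_sub_normSq_pos hb).ne'
  have h' : normSq (1 - (starRingEnd ℂ) b * z) ≠ 0 := by simpa [normSq_eq_zero] using h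
  rw [invJac, one_add_conj_mul_phi h, phiDeriv, normSq_div, normSq_div, normSq_ofReal, map_pow]
  field_simp

lemma normSq_phiDeriv_pos {b z : ℂ} (hb : ‖b‖ < 1) (hz : ‖z‖ ≤ 1) :
    0 < normSq (phiDeriv b z) :=
  normSq_pos.2 (div_ne_zero (ofReal_ne_zero.2 (one_sub_normSq_pos hb).ne')
    (pow_ne_zero 2 (one_sub_conj_mul_ne_zero hb hz)))

/-- The Fréchet derivative over `ℝ` of `phi b`. -/
noncomputable def phiFDeriv (b z : ℂ) : ℂ →L[ℝ] ℂ :=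
  (ContinuousLinearMap.toSpanSingleton ℂ (phiDeriv b z)).restrictScalars ℝ

lemma hasFDerivAt_phi {b z : ℂ} (h : 1 - (starRingEnd ℂ) b * z ≠ 0) :
    HasFDerivAt (phi b) (phiFDeriv b z) z :=
  (hasDerivAt_phi h).hasFDerivAt.restrictScalars ℝ

lemma det_phiFDeriv (b z : ℂ) : (phiFDeriv b z).det = normSq (phiDeriv b z) := by
  simp [phiFDeriv, ContinuousLinearMap.det, LinearMap.det_restrictScalars,
    Algebra.norm_complex_eq]

lemma gradSq_comp_phi {K : ℕ} {u : ℂ → EuclideanSpace ℝ (Fin K)} {b z : ℂ}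
    (h : 1 - (starRingEnd ℂ) b * z ≠ 0) (hu : DifferentiableAt ℝ u (phi b z)) :
    gradSq (fun w => u (phi b w)) z = normSq (phiDeriv b z) * gradSq u (phi b z) := by
  have h1 : HasFDerivAt (fun w => u (phi b w)) _ z := hu.hasFDerivAt.comp z (hasFDerivAt_phi h)
  rw [gradSq, gradSq, h1.fderiv]
  set L := fderiv ℝ u (phi b z)
  set c := phiDeriv b z with hc
  have e1 : phiFDeriv b z 1 = c.re • (1 : ℂ) + c.im • I := by
    simp [phiFDeriv, ← hc]
  have e2 : phiFDeriv b z I = c.re • I - c.im • (1 : ℂ) := by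
    apply Complex.ext <;> simp [phiFDeriv, ← hc]
  rw [ContinuousLinearMap.comp_apply, ContinuousLinearMap.comp_apply, e1, e2, map_add, map_sub]
  simp only [map_smul]
  rw [norm_add_sq_real, norm_sub_sq_real]
  simp only [norm_smul, inner_smul_left, inner_smul_right, Real.norm_eq_abs, mul_pow, sq_abs,
    normSq_apply, real_inner_comm]
  simp
  ring

/-- The energy density transported by a conformal change of variables with Jacobian `j`. -/
noncomputable def energyDensity (α g j : ℝ) : ℝ := j * (1 + g / j) ^ α

lemma integral_energy_comp_phi {K : ℕ} {u : ℂ → EuclideanSpace ℝ (Fin K)} {b : ℂ} (α : ℝ)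
    (hb : ‖b‖ < 1) (hu : ∀ z ∈ ball (0 : ℂ) 1, DifferentiableAt ℝ u z) :
    ∫ z in ball (0 : ℂ) 1, (1 + gradSq (fun w => u (phi b w)) z) ^ α =
      ∫ w in ball (0 : ℂ) 1, energyDensity α (gradSq u w) (invJac b w) := by
  have hne : ∀ z ∈ ball (0 : ℂ) 1, 1 - (starRingEnd ℂ) b * z ≠ 0 := fun z hz =>
    one_sub_conj_mul_ne_zero hb (mem_ball_zero_iff.1 hz).le
  have hinj : Set.InjOn (phi b) (ball 0 1) := fun z hz w hw hzw => by
    rw [← phi_neg_phi hb (mem_ball_zero_iff.1 hz).le, hzw,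
      phi_neg_phi hb (mem_ball_zero_iff.1 hw).le]
  conv_rhs => rw [← image_phi_ball hb]
  rw [integral_image_eq_integral_abs_det_fderiv_smul volume measurableSet_ball
    (fun z hz => (hasFDerivAt_phi (hne z hz)).hasFDerivWithinAt) hinj]
  refine setIntegral_congr_fun measurableSet_ball fun z hz => ?_
  have hz' := mem_ball_zero_iff.1 hz
  have hpos := normSq_phiDeriv_pos hb hz'.le
  rw [gradSq_comp_phi (hne z hz) (hu _ (mem_ball_zero_iff.2 (norm_phi_lt_one hb hz'))),
    det_phiFDeriv, abs_of_pos hpos, energyDensity, invJac_phi hb hz'.le, div_inv_eq_mul,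
    smul_eq_mul, mul_inv_cancel_left₀ hpos.ne', mul_comm (gradSq u _)]

lemma hasDerivAt_energyDensity {α g j : ℝ} (hg : 0 ≤ g) (hj : 0 < j) :
    HasDerivAt (energyDensity α g)
      ((1 + g / j) ^ α - α * (1 + g / j) ^ (α - 1) * (g / j)) j := by
  have hpos : 0 < 1 + g / j := by positivity
  have h1 : HasDerivAt (fun x : ℝ => 1 + g / x) (-g / j ^ 2) j := by
    refine (((hasDerivAt_inv hj.ne').const_mul g).const_add 1).congr_deriv ?_
    ring
  have h2 := (hasDerivAt_id j).mul (h1.rpow_const (p := α) (Or.inl hpos.ne'))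
  refine h2.congr_deriv ?_
  simp only [id]
  field_simp
  ring

lemma abs_energyDensity_sub_le {α g j M : ℝ} (hα : 1 < α) (hg : 0 ≤ g) (hgM : g ≤ M)
    (hj : j ∈ Set.Icc (1 / 2 : ℝ) 2) :
    |energyDensity α g j - energyDensity α g 1| ≤
      ((1 + 2 * M) ^ α + α * (1 + 2 * M) ^ (α - 1) * (2 * M)) * |j - 1| := by
  refine (convex_Icc (1 / 2 : ℝ) 2).norm_image_sub_le_of_norm_hasDerivWithin_le
    (fun x hx => (hasDerivAt_energyDensity hg (by linarith [hx.1])).hasDerivWithinAt)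
    (fun x hx => ?_) (by norm_num) hj
  have hx0 : 0 < x := by linarith [hx.1]
  have h1 : g / x ≤ 2 * M := by
    rw [div_le_iff₀ hx0]
    nlinarith [hx.1]
  have h0 : 0 ≤ g / x := by positivity
  have hp : ∀ p : ℝ, 0 ≤ p → (1 + g / x) ^ p ≤ (1 + 2 * M) ^ p := fun p hp =>
    Real.rpow_le_rpow (by positivity) (by linarith) hp
  have hq : 0 ≤ (1 + g / x) ^ α := by positivity
  have hr : 0 ≤ α * (1 + g / x) ^ (α - 1) * (g / x) := by positivity
  have hs : α * (1 + g / x) ^ (α - 1) * (g / x) ≤ α * (1 + 2 * M) ^ (α - 1) * (2 * M) := by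
    have := hp (α - 1) (by linarith)
    have h2 : 0 ≤ 1 + 2 * M := by linarith
    gcongr
  have := hp α (by linarith)
  rw [Real.norm_eq_abs, abs_le]
  constructor <;> linarith

lemma one_add_conj_mul_ne_zero {b w : ℂ} (hb : ‖b‖ < 1) (hw : ‖w‖ ≤ 1) :
    1 + (starRingEnd ℂ) b * w ≠ 0 := by
  simpa using one_sub_conj_mul_ne_zero (b := -b) (by rwa [norm_neg]) hw

lemma abs_invJac_sub_one_le {b w : ℂ} (hb : ‖b‖ ≤ 1 / 40) (hw : ‖w‖ ≤ 1) :
    |invJac b w - 1| ≤ 15 * ‖b‖ := by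
  set N := normSq (1 + (starRingEnd ℂ) b * w) with hN
  have hc : ‖(starRingEnd ℂ) b * w‖ ≤ ‖b‖ := by
    rw [norm_mul, RCLike.norm_conj]
    nlinarith [norm_nonneg b]
  have hN' : N = ‖1 + (starRingEnd ℂ) b * w‖ ^ 2 := normSq_eq_norm_sq _
  have h1 : ‖1 + (starRingEnd ℂ) b * w‖ ≤ 1 + ‖b‖ := by
    simpa using (norm_add_le 1 ((starRingEnd ℂ) b * w)).trans (add_le_add (by simp) hc)
  have h2 : 1 - ‖b‖ ≤ ‖1 + (starRingEnd ℂ) b * w‖ := by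
    have := norm_sub_le (1 + (starRingEnd ℂ) b * w) ((starRingEnd ℂ) b * w)
    rw [add_sub_cancel_right, norm_one] at this
    linarith
  have hb0 := norm_nonneg b
  have hNu : N ≤ (1 + ‖b‖) ^ 2 := by
    rw [hN']; gcongr
  have hNl : (1 - ‖b‖) ^ 2 ≤ N := by
    rw [hN']; gcongr; linarith
  have hNpos : 0 < N := by nlinarith
  rw [invJac, ← hN, normSq_eq_norm_sq]
  set r := (1 - ‖b‖ ^ 2) / N with hr
  have hr1 : r ≤ 1 + 5 * ‖b‖ := by
    rw [hr, div_le_iff₀ hNpos]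
    nlinarith
  have hr2 : 1 - 5 * ‖b‖ ≤ r := by
    rw [hr, le_div_iff₀ hNpos]
    nlinarith
  rw [abs_le]
  constructor <;> nlinarith

lemma invJac_mem_Icc {b w : ℂ} (hb : ‖b‖ ≤ 1 / 40) (hw : ‖w‖ ≤ 1) :
    invJac b w ∈ Set.Icc (1 / 2 : ℝ) 2 := by
  have h := abs_le.1 (abs_invJac_sub_one_le hb hw)
  constructor <;> linarith [h.1, h.2]

@[simp] lemma invJac_zero (w : ℂ) : invJac 0 w = 1 := by simp [invJac]

lemma hasDerivAt_invJac {β : ℝ → ℂ} {β' : ℂ} (hd : HasDerivAt β β' 0) (h0 : β 0 = 0) (w : ℂ) :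
    HasDerivAt (fun t => invJac (β t) w) (-4 * ((starRingEnd ℂ) β' * w).re) 0 := by
  have hre : HasDerivAt (fun t => (β t).re) β'.re 0 :=
    reCLM.hasFDerivAt.comp_hasDerivAt (0 : ℝ) hd
  have him : HasDerivAt (fun t => (β t).im) β'.im 0 :=
    imCLM.hasFDerivAt.comp_hasDerivAt (0 : ℝ) hd
  have hP : HasDerivAt (fun t => 1 - normSq (β t)) 0 0 := by
    simp only [normSq_apply]
    refine (((hre.mul hre).add (him.mul him)).const_sub 1).congr_deriv ?_
    simp [h0]
  have hQ : HasDerivAt (fun t => normSq (1 + (starRingEnd ℂ) (β t) * w))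
      (2 * ((starRingEnd ℂ) β' * w).re) 0 := by
    have hx := ((hre.mul_const w.re).add (him.mul_const w.im)).const_add 1
    have hy := (hre.mul_const w.im).sub (him.mul_const w.re)
    refine (((hx.mul hx).add (hy.mul hy)).congr_deriv ?_).congr_of_eventuallyEq
      (Eventually.of_forall fun t => ?_)
    · simp [h0]
      ring
    · simp [normSq_apply]
      ring
  refine ((hP.div hQ (by simp [h0])).pow 2).congr_deriv ?_
  simp [h0]
  ring

lemma continuousOn_invJac {b : ℂ} (hb : ‖b‖ < 1) :
    ContinuousOn (invJac b) (closedBall 0 1) := by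
  refine ContinuousOn.pow (continuousOn_const.div
    (continuous_normSq.comp (by fun_prop)).continuousOn fun w hw => ?_) 2
  simpa [normSq_eq_zero] using one_add_conj_mul_ne_zero hb (mem_closedBall_zero_iff.1 hw)

lemma gradSq_nonneg {K : ℕ} (u : ℂ → EuclideanSpace ℝ (Fin K)) (z : ℂ) : 0 ≤ gradSq u z := by
  unfold gradSq; positivity

lemma continuousOn_gradSq {K : ℕ} {u : ℂ → EuclideanSpace ℝ (Fin K)} {V : Set ℂ}
    (hV : IsOpen V) (hu : ContDiffOn ℝ 1 u V) : ContinuousOn (gradSq u) V := by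
  have h := hu.continuousOn_fderiv_of_isOpen hV le_rfl
  exact ((h.clm_apply continuousOn_const).norm.pow 2).add
    ((h.clm_apply continuousOn_const).norm.pow 2)

lemma continuousOn_energyDensity {g j : ℂ → ℝ} {s : Set ℂ} (α : ℝ) (hg : ContinuousOn g s)
    (hj : ContinuousOn j s) (hg0 : ∀ z ∈ s, 0 ≤ g z) (hj0 : ∀ z ∈ s, 0 < j z) :
    ContinuousOn (fun z => energyDensity α (g z) (j z)) s :=
  hj.mul ((continuousOn_const.add (hg.div hj fun z hz => (hj0 z hz).ne')).rpow_const
    fun z hz => Or.inl (by exact (add_pos_of_pos_of_nonneg one_pos (div_nonneg (hg0 z hz) (hj0 z hz).le)).ne'))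

/-- The derivative at `t = 0` of the inner variation `t ↦ E_α(u ∘ φ_{β t})` of the
`α`-energy on the unit disk equals
`4·Re( conj(β′(0)) · ∫_D ( −(1+|∇u|²)^α + α(1+|∇u|²)^{α−1}|∇u|² )·z dA )`. -/
theorem stmt_5 (K : ℕ) (hK : 1 ≤ K) (u : ℂ → EuclideanSpace ℝ (Fin K)) (V : Set ℂ)
    (hV : IsOpen V) (hDV : Metric.closedBall (0 : ℂ) 1 ⊆ V) (hu : ContDiffOn ℝ 1 u V)
    (α : ℝ) (hα : 1 < α) (β : ℝ → ℂ) (β' : ℂ) (hd : HasDerivAt β β' 0) (h0 : β 0 = 0) :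
    HasDerivAt
      (fun t : ℝ =>
        ∫ z in Metric.ball (0 : ℂ) 1, (1 + gradSq (fun w => u (phi (β t) w)) z) ^ α)
      (4 * ((starRingEnd ℂ) β' *
        ∫ z in Metric.ball (0 : ℂ) 1,
          ((-(1 + gradSq u z) ^ α + α * (1 + gradSq u z) ^ (α - 1) * gradSq u z : ℝ) : ℂ)
            * z).re) 0 := by
  have hg := (continuousOn_gradSq hV hu).mono hDV
  have hdiff : ∀ z ∈ ball (0 : ℂ) 1, DifferentiableAt ℝ u z := fun z hz =>
    (hu.differentiableOn one_ne_zero).differentiableAt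
      (hV.mem_nhds (hDV (ball_subset_closedBall hz)))
  obtain ⟨M, hM⟩ := (isCompact_closedBall (0 : ℂ) 1).bddAbove_image hg
  replace hM : ∀ z ∈ closedBall (0 : ℂ) 1, gradSq u z ≤ M := fun z hz =>
    hM (Set.mem_image_of_mem _ hz)
  have hM0 : 0 ≤ M := (gradSq_nonneg u 0).trans (hM 0 (by simp))
  obtain ⟨C, hC⟩ := hd.differentiableAt.isBigO_sub.bound
  have hsmall : ∀ᶠ t in 𝓝 (0 : ℝ), ‖β t‖ < 1 / 40 := by
    have := hd.continuousAt.norm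
    exact this.eventually_lt_const (by simp [h0])
  set s : Set ℝ := {t | ‖β t‖ < 1 / 40 ∧ ‖β t‖ ≤ C * ‖t‖}
  have hs : s ∈ 𝓝 (0 : ℝ) := by
    filter_upwards [hsmall, hC] with t ht htC
    exact ⟨ht, by simpa [h0] using htC⟩
  set D := (1 + 2 * M) ^ α + α * (1 + 2 * M) ^ (α - 1) * (2 * M)
  have hD : 0 ≤ D := by positivity
  have hcont : ∀ t ∈ s, ContinuousOn
      (fun w => energyDensity α (gradSq u w) (invJac (β t) w)) (closedBall 0 1) := fun t ht =>
    continuousOn_energyDensity α hg (continuousOn_invJac (by linarith [ht.1]))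
      (fun z _ => gradSq_nonneg u z) fun z hz => by
        linarith [(invJac_mem_Icc ht.1.le (mem_closedBall_zero_iff.1 hz)).1]
  set f : ℂ → ℝ := fun z =>
    -(1 + gradSq u z) ^ α + α * (1 + gradSq u z) ^ (α - 1) * gradSq u z with hf
  have hf_cont : ContinuousOn f (closedBall 0 1) := by
    have hp : ∀ p : ℝ, ContinuousOn (fun z => (1 + gradSq u z) ^ p) (closedBall 0 1) := fun p =>
      (continuousOn_const.add hg).rpow_const fun z _ =>
        Or.inl (add_pos_of_pos_of_nonneg one_pos (gradSq_nonneg u z)).ne'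
    exact (hp α).neg.add ((continuousOn_const.mul (hp (α - 1))).mul hg)
  have hint_of : ∀ {E : Type} [NormedAddCommGroup E] {F : ℂ → E},
      ContinuousOn F (closedBall 0 1) → IntegrableOn F (ball 0 1) := fun h =>
    (h.integrableOn_compact (isCompact_closedBall 0 1)).mono_set ball_subset_closedBall
  set F' : ℂ → ℝ := fun z => 4 * ((starRingEnd ℂ) β' * ((f z : ℂ) * z)).re with hF'
  have hF'_cont : ContinuousOn F' (closedBall 0 1) := by
    refine continuousOn_const.mul (continuous_re.comp_continuousOn (continuousOn_const.mul
      ((continuous_ofReal.comp_continuousOn hf_cont).mul continuousOn_id)))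
  have hval : ∫ z in ball (0 : ℂ) 1, F' z =
      4 * ((starRingEnd ℂ) β' * ∫ z in ball (0 : ℂ) 1, (f z : ℂ) * z).re := by
    have hfi : IntegrableOn (fun z => (f z : ℂ) * z) (ball 0 1) :=
      hint_of ((continuous_ofReal.comp_continuousOn hf_cont).mul continuousOn_id)
    rw [← integral_const_mul ((starRingEnd ℂ) β'), hF', integral_const_mul]
    congr 1
    exact reCLM.integral_comp_comm (hfi.const_mul _)
  rw [← hval]
  have key := hasFDerivAt_integral_of_dominated_loc_of_lip' (𝕜 := ℝ)
    (μ := volume.restrict (ball (0 : ℂ) 1)) (x₀ := (0 : ℝ)) (s := s)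
    (F := fun t w => energyDensity α (gradSq u w) (invJac (β t) w))
    (F' := fun w => ContinuousLinearMap.toSpanSingleton ℝ (F' w))
    (bound := fun _ => D * (15 * C)) hs
    (fun t ht => (hint_of (hcont t ht)).aestronglyMeasurable)
    (hint_of (hcont 0 (mem_of_mem_nhds hs)))
    (((ContinuousLinearMap.toSpanSingletonCLE (𝕜 := ℝ) (E := ℝ)).continuous.comp_aestronglyMeasurable
      (hint_of hF'_cont).aestronglyMeasurable))
    ?_ (hint_of continuousOn_const) ?_
  · have h2 := key.2.hasDerivAt
    rw [ContinuousLinearMap.integral_apply key.1] at h2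
    simp only [ContinuousLinearMap.toSpanSingleton_apply, one_smul] at h2
    refine h2.congr_of_eventuallyEq ?_
    filter_upwards [hsmall] with t ht
    exact integral_energy_comp_phi α (by linarith) hdiff
  · filter_upwards [ae_restrict_mem measurableSet_ball] with w hw t ht
    have hw' := (mem_ball_zero_iff.1 hw).le
    simp only [h0, invJac_zero, sub_zero, Real.norm_eq_abs]
    calc _ ≤ D * |invJac (β t) w - 1| :=
          abs_energyDensity_sub_le hα (gradSq_nonneg u w) (hM w (ball_subset_closedBall hw))
            (invJac_mem_Icc ht.1.le hw')
      _ ≤ D * (15 * (C * |t|)) := by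
          gcongr
          exact (abs_invJac_sub_one_le ht.1.le hw').trans (by gcongr; exact ht.2)
      _ = _ := by ring
  · filter_upwards with w
    have h1 := hasDerivAt_energyDensity (α := α) (gradSq_nonneg u w)
      (j := invJac (β 0) w) (by simp [h0])
    refine ((h1.comp (0 : ℝ) (hasDerivAt_invJac hd h0 w)).congr_deriv ?_).hasFDerivAt
    simp only [h0, invJac_zero, div_one, hF', hf, mul_left_comm _ (ofReal _), re_ofReal_mul]
    ring
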